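/- For all integers n > n′ ≥ 1, a single object O of type 𝒯_{n,n′} with initial value s solves recoverable wait-free binary consensus among n′ processes: in the algorithm where each process with input x ∈ {0,1}, starting from its initial state (also after each crash), first applies op_R to O and decides v if the response is s_{v,i} for some i, decides 0 if the response is ⊥, and otherwise (response s) applies op_x to O and decides the value returned, every execution with individual crashes satisfies agreement, validity, and recoverable wait-freedom; moreover in every execution of this algorithm no op_R operation ever returns ⊥. -/

import Mathlib

/-!
Call a process *poised* if it has read `s` and is about to apply `op_x`.  The key invariant is
that the object never holds `s_⊥`, and that when it holds `s_{v,i}` the number of poised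
processes is at most `n' - i`.  It holds trivially while the value is `s`, since there are only
`n'` processes; each `op_x` raises `i` by one but removes one poised process; and once the
object has left `s`, no process becomes poised again, because every `op_R` now returns
`s_{v,i}`, even after a crash.  As `i ≤ n' ≤ n - 1` throughout, `op_R` never sees `i > n'` and
`op_x` never leads to `s_⊥`.

Under this invariant every event is one of six harmless transitions (`Trans`,
`trans_applyEvent`), which preserve the invariant (`Trans.good`).  They also keep the
bit `v` of `s_{v,i}` fixed forever, a process decides only the bit stored in the object at that
time, and the bit originates from an input (`Trans.inv`, `Trans.mid`); this gives agreement and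
validity.

Recoverable wait-freedom is required from arbitrary configurations.  A process that starts from
its initial state decides with its first step unless that step returns `s`.  In that case the
object holds `s`, so the invariant holds from that point on, whatever happened before, and the
process's next step returns a bit.
-/

namespace RecoverableConsensus

/-- A deterministic object type: a set of values, operations and responses together with a
transition function assigning to each (value, operation) pair a unique response and a unique
resulting value. -/
structure DetType : Type 1 where
  Value : Type
  Op : Type
  Resp : Type
  δ : Value → Op → Resp × Value

/-- A type is readable if it has a Read operation that returns (an injective encoding of)
the current value of the object without changing it. -/
def Readable (T : DetType) : Prop :=
  ∃ (read : T.Op) (ι : T.Value → T.Resp),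
    Function.Injective ι ∧ ∀ v, T.δ v read = (ι v, v)

/-- The register type over the value set `V`: the operation `none` is Read (returning the
current value without changing it) and `some v` is Write(v) (changing the value to `v`). -/
def RegisterType (V : Type) : DetType where
  Value := V
  Op := Option V
  Resp := V
  δ := fun u op =>
    match op with
    | none => (u, u)
    | some v => (v, v)

def IsRegister (T : DetType) : Prop := ∃ V : Type, T = RegisterType V

/-- An event is either a step by a process or a crash of a process. -/
inductive Event (n : ℕ) : Type where
  | step : Fin n → Event n
  | crash : Fin n → Event n
deriving DecidableEq

/-- An algorithm for `n` processes: a collection of shared objects, each with a deterministic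
type and an initial value, and for each process a deterministic state machine with an initial
state depending on the process's binary input.  Each state determines the process's next step
(`pending`: an operation applied to a designated object, or `none` for a no-op); the state
reached after a step is determined by the current state and the response received (`next`).
`output i s = some v` means that `s` is an output state of process `i` for the value `v`;
processes in output states take only no-op steps. -/
structure Algorithm (n : ℕ) : Type 1 where
  ObjIdx : Type
  objType : ObjIdx → DetType
  objInit : (o : ObjIdx) → (objType o).Value
  PState : Fin n → Type
  init : (i : Fin n) → Bool → PState i
  pending : (i : Fin n) → PState i → Option ((o : ObjIdx) × (objType o).Op)
  next : (i : Fin n) → PState i → (o : ObjIdx) → (objType o).Resp → PState i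
  output : (i : Fin n) → PState i → Option Bool
  output_noop : ∀ i s, output i s ≠ none → pending i s = none

/-- A configuration assigns a state to each process and a value to each object. -/
structure Config {n : ℕ} (A : Algorithm n) : Type where
  pstate : (i : Fin n) → A.PState i
  oval : (o : A.ObjIdx) → (A.objType o).Value

variable {n : ℕ}

/-- The effect of one event on a configuration.  A crash of `p_i` resets `p_i` to its initial
state (for its input) and leaves all object values unchanged; a step of `p_i` applies its
pending operation (if any) to the designated object, receiving the response determined by the
type's transition function. -/
noncomputable def applyEvent (A : Algorithm n) (input : Fin n → Bool) (C : Config A) :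
    Event n → Config A
  | .crash i => { C with pstate := Function.update C.pstate i (A.init i (input i)) }
  | .step i =>
    letI : DecidableEq A.ObjIdx := Classical.decEq _
    match A.pending i (C.pstate i) with
    | none => C
    | some ⟨o, op⟩ =>
      { pstate := Function.update C.pstate i
          (A.next i (C.pstate i) o ((A.objType o).δ (C.oval o) op).1),
        oval := Function.update C.oval o ((A.objType o).δ (C.oval o) op).2 }

/-- Since the algorithm is deterministic, a finite execution from `C` is determined by its
schedule, i.e. its list of events; `run A input C σ` is the configuration `Cσ` reached by
applying the events of `σ` in order from `C`. -/
noncomputable def run (A : Algorithm n) (input : Fin n → Bool) (C : Config A) :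
    List (Event n) → Config A
  | [] => C
  | e :: σ => run A input (applyEvent A input C e) σ

/-- The initial configuration: every process in its initial state, every object at its
initial value. -/
def initConfig (A : Algorithm n) (input : Fin n → Bool) : Config A :=
  ⟨fun i => A.init i (input i), A.objInit⟩

/-- Process `i` has decided `v` in `Cσ`: at some point along the execution `σ` from `C`,
process `i` was in an output state for `v`. -/
def HasDecided (A : Algorithm n) (input : Fin n → Bool) (C : Config A)
    (σ : List (Event n)) (i : Fin n) (v : Bool) : Prop :=
  ∃ τ, τ <+: σ ∧ A.output i ((run A input C τ).pstate i) = some v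

def CrashFree (σ : List (Event n)) : Prop := ∀ i : Fin n, Event.crash i ∉ σ

/-- The first `k` events of an infinite execution. -/
def initSeg (e : ℕ → Event n) (k : ℕ) : List (Event n) := (List.range k).map e

/-- Agreement: in every execution no two processes decide different values. -/
def Agreement (A : Algorithm n) : Prop :=
  ∀ (input : Fin n → Bool) (σ : List (Event n)) (i j : Fin n) (v w : Bool),
    HasDecided A input (initConfig A input) σ i v →
    HasDecided A input (initConfig A input) σ j w → v = w

/-- Validity: every decided value is the input of some process. -/
def Validity (A : Algorithm n) : Prop :=
  ∀ (input : Fin n → Bool) (σ : List (Event n)) (i : Fin n) (v : Bool),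
    HasDecided A input (initConfig A input) σ i v → ∃ j, input j = v

/-- Recoverable wait-freedom: every process, starting from its initial state, either crashes
or decides within a finite number of its own steps.  Equivalently: in every infinite execution
in which process `i` starts at (or is reset by a crash to) its initial state, takes infinitely
many steps and crashes only finitely often, it eventually reaches an output state. -/
def RecWaitFree (A : Algorithm n) : Prop :=
  ∀ (input : Fin n → Bool) (C : Config A) (e : ℕ → Event n) (i : Fin n),
    (C.pstate i = A.init i (input i) ∨ ∃ k, e k = Event.crash i) →
    (∀ m, ∃ k, m ≤ k ∧ e k = Event.step i) →
    (∃ m, ∀ k, m ≤ k → e k ≠ Event.crash i) →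
    ∃ (k : ℕ) (v : Bool), A.output i ((run A input C (initSeg e k)).pstate i) = some v

/-- A recoverable wait-free binary consensus algorithm. -/
def SolvesRecConsensus (A : Algorithm n) : Prop :=
  Agreement A ∧ Validity A ∧ RecWaitFree A

/-- Agreement restricted to crash-free executions. -/
def AgreementCF (A : Algorithm n) : Prop :=
  ∀ (input : Fin n → Bool) (σ : List (Event n)), CrashFree σ →
    ∀ (i j : Fin n) (v w : Bool),
      HasDecided A input (initConfig A input) σ i v →
      HasDecided A input (initConfig A input) σ j w → v = w

/-- Validity restricted to crash-free executions. -/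
def ValidityCF (A : Algorithm n) : Prop :=
  ∀ (input : Fin n → Bool) (σ : List (Event n)), CrashFree σ →
    ∀ (i : Fin n) (v : Bool),
      HasDecided A input (initConfig A input) σ i v → ∃ j, input j = v

/-- Wait-freedom: in crash-free executions, every process that takes infinitely many steps
decides. -/
def WaitFree (A : Algorithm n) : Prop :=
  ∀ (input : Fin n → Bool) (e : ℕ → Event n),
    (∀ (k : ℕ) (i : Fin n), e k ≠ Event.crash i) →
    ∀ i : Fin n, (∀ m, ∃ k, m ≤ k ∧ e k = Event.step i) →
    ∃ (k : ℕ) (v : Bool),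
      A.output i ((run A input (initConfig A input) (initSeg e k)).pstate i) = some v

/-- A wait-free binary consensus algorithm (for the model in which crashes are permanent,
i.e. only crash-free executions are relevant). -/
def SolvesWFConsensus (A : Algorithm n) : Prop :=
  AgreementCF A ∧ ValidityCF A ∧ WaitFree A

/-- The number of crashes of process `i` in `σ`. -/
def crashCount (i : Fin n) (σ : List (Event n)) : ℕ :=
  (σ.filter fun e => decide (e = Event.crash i)).length

def isStepBelow (i : Fin n) : Event n → Bool
  | .step j => decide (j < i)
  | .crash _ => false

/-- The total number of steps taken by processes `p_0, …, p_{i-1}` in `σ`. -/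
def stepsBelow (i : Fin n) (σ : List (Event n)) : ℕ := (σ.filter (isStepBelow i)).length

/-- The crash bound: for every process `p_i`, the number of crashes of `p_i` is at most
`z·n` times the total number of steps of `p_0, …, p_{i-1}` (for `i = 0` this says that `p_0`
never crashes). -/
def EMem (z : ℕ) (σ : List (Event n)) : Prop :=
  ∀ i : Fin n, crashCount i σ ≤ z * n * stepsBelow i σ

/-- `𝓔_z`: executions satisfying the crash bound. -/
def ESet (n z : ℕ) : Set (List (Event n)) := { σ | EMem z σ }

/-- `𝓔*_z`: executions satisfying the crash bound in every prefix. -/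
def EStarSet (n z : ℕ) : Set (List (Event n)) := { σ | ∀ τ, τ <+: σ → EMem z τ }

/-- `e` is an event by a process in `P`. -/
def eventBy (P : Set (Fin n)) : Event n → Prop
  | .step i => i ∈ P
  | .crash i => i ∈ P

/-- The set of processes `P` is `v`-univalent in the execution `α` from `C` with respect to
the set of executions `𝒜`. -/
def VUnivalentIn (A : Algorithm n) (input : Fin n → Bool) (C : Config A)
    (𝒜 : Set (List (Event n))) (P : Set (Fin n)) (α : List (Event n)) (v : Bool) : Prop :=
  α ∈ 𝒜 ∧ ∀ β : List (Event n), (∀ e ∈ β, eventBy P e) → (α ++ β) ∈ 𝒜 →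
    ∀ (i : Fin n) (w : Bool), HasDecided A input C (α ++ β) i w → w = v

/-- The set of processes `P` is bivalent in the execution `α` from `C` with respect to `𝒜`. -/
def BivalentIn (A : Algorithm n) (input : Fin n → Bool) (C : Config A)
    (𝒜 : Set (List (Event n))) (P : Set (Fin n)) (α : List (Event n)) : Prop :=
  ∀ v : Bool, ∃ β : List (Event n), (∀ e ∈ β, eventBy P e) ∧ (α ++ β) ∈ 𝒜 ∧
    ∃ i : Fin n, HasDecided A input C (α ++ β) i v

/-- `P` is univalent in `α` with respect to `𝒜`: `v`-univalent for some `v`. -/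
def UnivalentIn (A : Algorithm n) (input : Fin n → Bool) (C : Config A)
    (𝒜 : Set (List (Event n))) (P : Set (Fin n)) (α : List (Event n)) : Prop :=
  ∃ v : Bool, VUnivalentIn A input C 𝒜 P α v

/-- `α ∈ 𝒜` is critical with respect to `𝒜`: `α` is bivalent with respect to `𝒜` and every
nonempty extension of `α` inside `𝒜` is univalent with respect to `𝒜`. -/
def Critical (A : Algorithm n) (input : Fin n → Bool) (C : Config A)
    (𝒜 : Set (List (Event n))) (α : List (Event n)) : Prop :=
  α ∈ 𝒜 ∧ BivalentIn A input C 𝒜 Set.univ α ∧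
  ∀ β : List (Event n), β ≠ [] → (α ++ β) ∈ 𝒜 → UnivalentIn A input C 𝒜 Set.univ (α ++ β)

/-- Process `i` is on team `v` in `Cα` (with respect to `𝒜`): `α p_i` is `v`-univalent. -/
def OnTeam (A : Algorithm n) (input : Fin n → Bool) (C : Config A)
    (𝒜 : Set (List (Event n))) (α : List (Event n)) (i : Fin n) (v : Bool) : Prop :=
  VUnivalentIn A input C 𝒜 Set.univ (α ++ [Event.step i]) v

/-- Process `i` is poised to apply an operation to object `O` in configuration `C`. -/
def PoisedAt (A : Algorithm n) (C : Config A) (i : Fin n) (O : A.ObjIdx) : Prop :=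
  ∃ op, A.pending i (C.pstate i) = some ⟨O, op⟩

/-- `σ ∈ 𝒮(P)`: a crash-free schedule in which each process of `P` takes at most one step
and no other process takes a step. -/
def IsSched (P : Set (Fin n)) (σ : List (Event n)) : Prop :=
  ∃ l : List (Fin n), l.Nodup ∧ (∀ j ∈ l, j ∈ P) ∧ σ = l.map Event.step

/-- The schedule `λ_k = c_k c_{k+1} ⋯ c_{n-1}`. -/
def lambdaSched (n k : ℕ) : List (Event n) :=
  ((List.finRange n).filter fun j => decide (k ≤ j.val)).map Event.crash

/-- `U_v`: the set of values of object `O` reachable from `Dα` by a schedule in `𝒮(𝒫)`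
whose first process is on team `v`. -/
def USetCfg (A : Algorithm n) (input : Fin n → Bool) (D : Config A)
    (𝒜 : Set (List (Event n))) (α : List (Event n)) (O : A.ObjIdx) (v : Bool) :
    Set (A.objType O).Value :=
  { w | ∃ (j : Fin n) (σ : List (Event n)), OnTeam A input D 𝒜 α j v ∧
        IsSched {k : Fin n | k ≠ j} σ ∧
        w = (run A input D (α ++ Event.step j :: σ)).oval O }

/-- The configuration `Dα` is `v`-hiding. -/
def VHiding (A : Algorithm n) (input : Fin n → Bool) (D : Config A)
    (𝒜 : Set (List (Event n))) (α : List (Event n)) (O : A.ObjIdx) (v : Bool) : Prop :=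
  USetCfg A input D 𝒜 α O false ∩ USetCfg A input D 𝒜 α O true = ∅ ∧
  (run A input D α).oval O ∈ USetCfg A input D 𝒜 α O v

/-- The configuration `Dα` is `n`-recording. -/
def NRecordingCfg (A : Algorithm n) (input : Fin n → Bool) (D : Config A)
    (𝒜 : Set (List (Event n))) (α : List (Event n)) (O : A.ObjIdx) : Prop :=
  USetCfg A input D 𝒜 α O false ∩ USetCfg A input D 𝒜 α O true = ∅ ∧
  ∀ v : Bool, (run A input D α).oval O ∈ USetCfg A input D 𝒜 α O v →
    ∃! j : Fin n, OnTeam A input D 𝒜 α j (!v)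

/-- Apply the operations `o i` of the processes listed in `σ`, in order, to an object of type
`T`, starting from the value `u`. -/
def applyOps (T : DetType) (o : Fin n → T.Op) : T.Value → List (Fin n) → T.Value
  | u, [] => u
  | u, i :: σ => applyOps T o (T.δ u (o i)).2 σ

/-- `U_x`: the set of values obtainable by applying the operations of the processes of a
duplicate-free schedule whose first process is on team `x` to an object with initial value
`u`. -/
def UVals (T : DetType) (o : Fin n → T.Op) (u : T.Value) (team : Fin n → Bool) (x : Bool) :
    Set T.Value :=
  { v | ∃ (i : Fin n) (σ : List (Fin n)), team i = x ∧ (i :: σ).Nodup ∧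
        v = applyOps T o u (i :: σ) }

/-- A deterministic type `T` is `n`-recording. -/
def NRecording (n : ℕ) (T : DetType) : Prop :=
  ∃ (u : T.Value) (team : Fin n → Bool) (o : Fin n → T.Op),
    (∀ x : Bool, ∃ i, team i = x) ∧
    (UVals T o u team false ∩ UVals T o u team true = ∅) ∧
    (∀ x : Bool, u ∈ UVals T o u team x → ∃! i, team i = !x)

end RecoverableConsensus
namespace RecoverableConsensus

/-- The values of the type `𝒯_{n,n'}`: `s`, `s_⊥`, and `s_{x,i}` for `x ∈ {0,1}` and
`i ∈ {1, …, n-1}` (here `mid x i` with `i : Fin (n-1)` represents `s_{x, i+1}`). -/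
inductive TVal (n : ℕ) : Type where
  | s : TVal n
  | bot : TVal n
  | mid : Bool → Fin (n - 1) → TVal n
deriving DecidableEq

/-- The operations of `𝒯_{n,n'}`. -/
inductive TOp : Type where
  | op0 | op1 | opR
deriving DecidableEq

/-- The responses of `𝒯_{n,n'}`: a bit, a value, or `⊥`. -/
inductive TResp (n : ℕ) : Type where
  | bit : Bool → TResp n
  | val : TVal n → TResp n
  | botR : TResp n
deriving DecidableEq

/-- The deterministic (non-readable) type `𝒯_{n,n'}` for `n > n' ≥ 1`. -/
def TType (n n' : ℕ) (hn : 2 ≤ n) : DetType where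
  Value := TVal n
  Op := TOp
  Resp := TResp n
  δ := fun v op =>
    match v, op with
    | .s, .op0 => (.bit false, .mid false ⟨0, by omega⟩)
    | .s, .op1 => (.bit true, .mid true ⟨0, by omega⟩)
    | .s, .opR => (.val .s, .s)
    | .bot, _ => (.botR, .bot)
    | .mid x i, .op0 =>
        if h : i.val + 1 < n - 1 then (.bit x, .mid x ⟨i.val + 1, h⟩) else (.bit x, .bot)
    | .mid x i, .op1 =>
        if h : i.val + 1 < n - 1 then (.bit x, .mid x ⟨i.val + 1, h⟩) else (.bit x, .bot)
    | .mid x i, .opR =>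
        if i.val + 1 ≤ n' then (.val (.mid x i), .mid x i) else (.botR, .bot)

/-- The algorithm uses only objects of type `T` together with registers. -/
def UsesTypeAndRegisters {n : ℕ} (A : Algorithm n) (T : DetType) : Prop :=
  ∀ o : A.ObjIdx, A.objType o = T ∨ IsRegister (A.objType o)

end RecoverableConsensus
namespace RecoverableConsensus

/-- Local states for the one-shot consensus algorithm: `start x` (about to apply `op_x`) and
`done v` (decided `v`). -/
inductive OSState : Type where
  | start : Bool → OSState
  | done : Bool → OSState
deriving DecidableEq

/-- The wait-free consensus algorithm for `n` processes using a single object of type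
`𝒯_{n,n'}` with initial value `s`: a process with input `x` applies `op_x` and decides the
value returned. -/
def oneShotAlg (n n' : ℕ) (hn : 2 ≤ n) : Algorithm n where
  ObjIdx := Unit
  objType _ := TType n n' hn
  objInit _ := TVal.s
  PState _ := OSState
  init _ x := .start x
  pending _ s :=
    match s with
    | .start x => some ⟨(), if x then TOp.op1 else TOp.op0⟩
    | .done _ => none
  next _ s _ r :=
    match s, r with
    | .start _, TResp.bit b => .done b
    | .start x, _ => .done x
    | .done v, _ => .done v
  output _ s :=
    match s with
    | .done v => some v
    | _ => none
  output_noop := by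
    intro i s h
    cases s with
    | start x => simp at h
    | done v => rfl

/-- Local states for the recoverable consensus algorithm: `phase0 x` (about to apply `op_R`),
`phase1 x` (saw `s`, about to apply `op_x`), `done v` (decided `v`). -/
inductive RecState : Type where
  | phase0 : Bool → RecState
  | phase1 : Bool → RecState
  | done : Bool → RecState
deriving DecidableEq

/-- The recoverable wait-free consensus algorithm for `n'` processes using a single object of
type `𝒯_{n,n'}` with initial value `s`: a process with input `x` first applies `op_R`; if the
response is `s_{v,i}` it decides `v`; if the response is `⊥` it decides `0`; otherwise (the
response is `s`) it applies `op_x` and decides the value returned. -/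
def recAlg (n n' : ℕ) (hn : 2 ≤ n) : Algorithm n' where
  ObjIdx := Unit
  objType _ := TType n n' hn
  objInit _ := TVal.s
  PState _ := RecState
  init _ x := .phase0 x
  pending _ s :=
    match s with
    | .phase0 _ => some ⟨(), TOp.opR⟩
    | .phase1 x => some ⟨(), if x then TOp.op1 else TOp.op0⟩
    | .done _ => none
  next _ s _ r :=
    match s, r with
    | .phase0 x, TResp.val TVal.s => .phase1 x
    | .phase0 _, TResp.val (TVal.mid v _) => .done v
    | .phase0 _, TResp.botR => .done false
    | .phase0 x, _ => .phase0 x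
    | .phase1 _, TResp.bit b => .done b
    | .phase1 x, _ => .phase1 x
    | .done v, _ => .done v
  output _ s :=
    match s with
    | .done v => some v
    | _ => none
  output_noop := by
    intro i s h
    cases s with
    | phase0 x => simp at h
    | phase1 x => simp at h
    | done v => rfl

end RecoverableConsensus

namespace RecoverableConsensus

/-! ### Executions of arbitrary algorithms -/

theorem run_append {m : ℕ} (A : Algorithm m) (input : Fin m → Bool) (C : Config A)
    (σ τ : List (Event m)) : run A input C (σ ++ τ) = run A input (run A input C σ) τ := by
  induction σ generalizing C with
  | nil => rfl
  | cons e σ ih => exact ih _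

theorem run_initSeg_succ {m : ℕ} (A : Algorithm m) (input : Fin m → Bool) (C : Config A)
    (e : ℕ → Event m) (k : ℕ) :
    run A input C (initSeg e (k + 1)) = applyEvent A input (run A input C (initSeg e k)) (e k) := by
  have : initSeg e (k + 1) = initSeg e k ++ [e k] := by
    simp [initSeg, List.range_succ]
  rw [this, run_append]
  rfl

theorem pstate_applyEvent_of_ne {m : ℕ} (A : Algorithm m) (input : Fin m → Bool) (C : Config A)
    (e : Event m) (i : Fin m) (hs : e ≠ .step i) (hc : e ≠ .crash i) :
    (applyEvent A input C e).pstate i = C.pstate i := by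
  cases e with
  | crash j =>
    have hij : i ≠ j := fun h => hc (by rw [h])
    simp [applyEvent, Function.update_of_ne hij]
  | step j =>
    have hij : i ≠ j := fun h => hs (by rw [h])
    simp only [applyEvent]
    split
    · rfl
    · exact Function.update_of_ne hij _ _

theorem applyEvent_step_none {m : ℕ} (A : Algorithm m) (input : Fin m → Bool) (C : Config A)
    (i : Fin m) (h : A.pending i (C.pstate i) = none) : applyEvent A input C (.step i) = C := by
  simp only [applyEvent, h]

theorem applyEvent_step_some {m : ℕ} (A : Algorithm m) (input : Fin m → Bool) (C : Config A)
    (i : Fin m) (o : A.ObjIdx) (op : (A.objType o).Op)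
    (h : A.pending i (C.pstate i) = some ⟨o, op⟩) :
    (applyEvent A input C (.step i)).pstate = Function.update C.pstate i
      (A.next i (C.pstate i) o ((A.objType o).δ (C.oval o) op).1) ∧
    (applyEvent A input C (.step i)).oval o = ((A.objType o).δ (C.oval o) op).2 := by
  simp [applyEvent, h]

/-- A process that takes infinitely many steps and does not crash from time `a` on takes a step
at some time `k ≥ a`, in the local state it has at time `a`. -/
theorem exists_next_step {m : ℕ} (A : Algorithm m) (input : Fin m → Bool) (C : Config A)
    (e : ℕ → Event m) (i : Fin m) (a : ℕ)
    (hstep : ∀ b, ∃ k, b ≤ k ∧ e k = Event.step i)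
    (hcrash : ∀ k, a ≤ k → e k ≠ Event.crash i) :
    ∃ k, a ≤ k ∧ e k = Event.step i ∧
      (run A input C (initSeg e k)).pstate i = (run A input C (initSeg e a)).pstate i := by
  classical
  have hk := Nat.find_spec (hstep a)
  have hmin := fun l (hl : l < Nat.find (hstep a)) => Nat.find_min (hstep a) hl
  generalize Nat.find (hstep a) = k at hk hmin
  refine ⟨k, hk.1, hk.2, ?_⟩
  have key : ∀ d, a + d ≤ k → (run A input C (initSeg e (a + d))).pstate i =
      (run A input C (initSeg e a)).pstate i := by
    intro d
    induction d with
    | zero => intro _; rfl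
    | succ d ih =>
      intro hd
      rw [← ih (by omega), ← add_assoc, run_initSeg_succ]
      exact pstate_applyEvent_of_ne _ _ _ _ _
        (fun h => hmin (a + d) (by omega) ⟨by omega, h⟩) (hcrash _ (by omega))
  obtain ⟨d, rfl⟩ := Nat.exists_eq_add_of_le hk.1
  exact key d le_rfl

/-! ### Counting poised processes -/

/-- The set of poised processes: those that have read `s` and not yet applied `op_x`. -/
def poised {n' : ℕ} (P : Fin n' → RecState) : Finset (Fin n') :=
  Finset.univ.filter fun j => ∃ x, P j = .phase1 x

theorem card_poised_update_le {n' : ℕ} (P : Fin n' → RecState) (i : Fin n') (q : RecState)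
    (hq : ∀ x, q ≠ .phase1 x) : (poised (Function.update P i q)).card ≤ (poised P).card := by
  apply Finset.card_le_card
  intro j hj
  simp only [poised, Finset.mem_filter, Finset.mem_univ, true_and] at hj ⊢
  obtain ⟨x, hx⟩ := hj
  by_cases h : j = i
  · subst h
    rw [Function.update_self] at hx
    exact absurd hx (hq x)
  · rw [Function.update_of_ne h] at hx
    exact ⟨x, hx⟩

theorem card_poised_update_lt {n' : ℕ} (P : Fin n' → RecState) (i : Fin n') (x v : Bool)
    (hi : P i = .phase1 x) :
    (poised (Function.update P i (.done v))).card < (poised P).card := by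
  apply Finset.card_lt_card
  refine (Finset.ssubset_iff_of_subset ?_).2 ⟨i, ?_, ?_⟩
  · intro j hj
    simp only [poised, Finset.mem_filter, Finset.mem_univ, true_and] at hj ⊢
    obtain ⟨y, hy⟩ := hj
    by_cases h : j = i
    · exact ⟨x, by rw [h, hi]⟩
    · rw [Function.update_of_ne h] at hy
      exact ⟨y, hy⟩
  · simp [poised, hi]
  · simp [poised]

theorem card_poised_le {n' : ℕ} (P : Fin n' → RecState) : (poised P).card ≤ n' := by
  simpa using Finset.card_le_univ (poised P)

/-! ### The abstract transition system and its invariants -/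

/-- The counting invariant on the local states `P` and the object value `o`.  Since `mid v k`
stands for `s_{v,k+1}`, it says that at most `n' - i` processes are poised when the value is
`s_{v,i}`. -/
def Good {n n' : ℕ} (P : Fin n' → RecState) (o : TVal n) : Prop :=
  o = .s ∨ ∃ v k, o = .mid v k ∧ k.val + 1 + (poised P).card ≤ n'

/-- The possible effects of an event on the local states and the object value, in
configurations that satisfy `Good`. -/
inductive Trans {n n' : ℕ} (input : Fin n' → Bool) :
    (Fin n' → RecState) → TVal n → (Fin n' → RecState) → TVal n → Prop
  | crash (P o i) : Trans input P o (Function.update P i (.phase0 (input i))) o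
  | noop (P o) : Trans input P o P o
  | readS (P i x) (h : P i = .phase0 x) :
      Trans input P .s (Function.update P i (.phase1 x)) .s
  | readMid (P i x v k) (h : P i = .phase0 x) :
      Trans input P (.mid v k) (Function.update P i (.done v)) (.mid v k)
  | opS (P i x k) (h : P i = .phase1 x) (hk : k.val = 0) :
      Trans input P .s (Function.update P i (.done x)) (.mid x k)
  | opMid (P i x v k k') (h : P i = .phase1 x) (hk : k'.val = k.val + 1) :
      Trans input P (.mid v k) (Function.update P i (.done v)) (.mid v k')

theorem Trans.good {n n' : ℕ} {input : Fin n' → Bool} {P P' : Fin n' → RecState} {o o' : TVal n}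
    (ht : Trans input P o P' o') (hg : Good P o) : Good P' o' := by
  cases ht with
  | crash _ i =>
    rcases hg with h | ⟨v, k, h, hc⟩
    · exact .inl h
    · have := card_poised_update_le P i (.phase0 (input i)) (by simp)
      exact .inr ⟨v, k, h, by omega⟩
  | noop => exact hg
  | readS i x h => exact .inl rfl
  | readMid i x v k h =>
    rcases hg with h | ⟨v', k', h, hc⟩
    · cases h
    · cases h
      have := card_poised_update_le P i (.done v) (by simp)
      exact .inr ⟨v, k, rfl, by omega⟩
  | opS i x k h hk =>
    have h1 := card_poised_update_lt P i x x h
    have h2 := card_poised_le P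
    exact .inr ⟨x, k, rfl, by omega⟩
  | opMid i x v k k' h hk =>
    have h1 := card_poised_update_lt P i x v h
    rcases hg with h | ⟨v', k'', h, hc⟩
    · cases h
    · cases h
      exact .inr ⟨v, k', rfl, by omega⟩

theorem Trans.mid {n n' : ℕ} {input : Fin n' → Bool} {P P' : Fin n' → RecState} {o o' : TVal n}
    (ht : Trans input P o P' o') {v : Bool} (h : ∃ k, o = .mid v k) : ∃ k, o' = .mid v k := by
  obtain ⟨k, rfl⟩ := h
  cases ht <;> exact ⟨_, rfl⟩

/-- The invariant behind agreement and validity: pending inputs are genuine, a decided process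
agrees with the bit stored in the object, and that bit is the input of some process. -/
structure Inv {n n' : ℕ} (input : Fin n' → Bool) (P : Fin n' → RecState) (o : TVal n) : Prop where
  phase0 : ∀ j x, P j = .phase0 x → x = input j
  phase1 : ∀ j x, P j = .phase1 x → x = input j
  done : ∀ j v, P j = .done v → ∃ k, o = .mid v k
  mid : ∀ v k, o = .mid v k → ∃ j, input j = v

theorem Trans.inv {n n' : ℕ} {input : Fin n' → Bool} {P P' : Fin n' → RecState} {o o' : TVal n}
    (ht : Trans input P o P' o') (hi : Inv input P o) : Inv input P' o' := by
  obtain ⟨h0, h1, hd, hv⟩ := hi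
  cases ht <;> constructor <;> first
    | grind [Function.update_apply]
    | (simp only [Function.update_apply, TVal.mid.injEq] at *
       grind)

/-! ### The transitions of the algorithm -/

section Alg

variable {n n' : ℕ} {hn : 2 ≤ n}

/-- The local states of a configuration of the algorithm, at their concrete type. -/
def cfgP (C : Config (recAlg n n' hn)) : Fin n' → RecState := C.pstate

/-- The value of the single object in a configuration of the algorithm, at its concrete type. -/
def cfgO (C : Config (recAlg n n' hn)) : TVal n := C.oval ()

theorem cfg_step_done (input : Fin n' → Bool) (C : Config (recAlg n n' hn)) (i : Fin n')
    (v : Bool) (h : cfgP C i = .done v) : applyEvent _ input C (.step i) = C := by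
  apply applyEvent_step_none
  change (recAlg n n' hn).pending i (cfgP C i) = none
  rw [h]
  rfl

theorem cfg_step_phase0 (input : Fin n' → Bool) (C : Config (recAlg n n' hn)) (i : Fin n')
    (x : Bool) (h : cfgP C i = .phase0 x) :
    cfgP (applyEvent _ input C (.step i)) = Function.update (cfgP C) i
      ((recAlg n n' hn).next i (.phase0 x) () ((TType n n' hn).δ (cfgO C) .opR).1) ∧
    cfgO (applyEvent _ input C (.step i)) = ((TType n n' hn).δ (cfgO C) .opR).2 := by
  have hp : (recAlg n n' hn).pending i (cfgP C i) = some ⟨(), TOp.opR⟩ := by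
    rw [h]
    rfl
  rw [← h]
  exact applyEvent_step_some _ input C i () _ hp

theorem cfg_step_phase1 (input : Fin n' → Bool) (C : Config (recAlg n n' hn)) (i : Fin n')
    (x : Bool) (h : cfgP C i = .phase1 x) :
    cfgP (applyEvent _ input C (.step i)) = Function.update (cfgP C) i
      ((recAlg n n' hn).next i (.phase1 x) ()
        ((TType n n' hn).δ (cfgO C) (if x then .op1 else .op0)).1) ∧
    cfgO (applyEvent _ input C (.step i)) =
      ((TType n n' hn).δ (cfgO C) (if x then .op1 else .op0)).2 := by
  have hp : (recAlg n n' hn).pending i (cfgP C i) = some ⟨(), if x then TOp.op1 else TOp.op0⟩ := by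
    rw [h]
    rfl
  rw [← h]
  exact applyEvent_step_some _ input C i () _ hp

theorem trans_applyEvent (h2 : n' < n) (input : Fin n' → Bool) (C : Config (recAlg n n' hn))
    (hg : Good (cfgP C) (cfgO C)) (e : Event n') :
    Trans input (cfgP C) (cfgO C) (cfgP (applyEvent _ input C e))
      (cfgO (applyEvent _ input C e)) := by
  cases e with
  | crash i => exact Trans.crash _ _ i
  | step i =>
    cases hp : cfgP C i with
    | done v =>
      rw [cfg_step_done input C i v hp]
      exact Trans.noop _ _
    | phase0 x =>
      obtain ⟨e1, e2⟩ := cfg_step_phase0 input C i x hp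
      rw [e1, e2]
      rcases hg with ho | ⟨v, k, ho, hc⟩ <;> rw [ho]
      · exact Trans.readS _ i x hp
      · have hk : k.val + 1 ≤ n' := by omega
        simpa [TType, recAlg, hk] using Trans.readMid (input := input) _ i x v k hp
    | phase1 x =>
      obtain ⟨e1, e2⟩ := cfg_step_phase1 input C i x hp
      rw [e1, e2]
      rcases hg with ho | ⟨v, k, ho, hc⟩ <;> rw [ho]
      · cases x
        · exact Trans.opS _ i false _ hp rfl
        · exact Trans.opS _ i true _ hp rfl
      · have hlt := card_poised_update_lt _ i x v hp
        -- Process `i` itself is poised, hence `k + 2 ≤ n' ≤ n - 1` and the value is not `s_⊥` next.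
        have hk : k.val + 1 < n - 1 := by omega
        cases x <;>
        simpa [TType, recAlg, hk] using
          Trans.opMid (input := input) _ i _ v k ⟨k.val + 1, hk⟩ hp rfl

theorem good_run (h2 : n' < n) (input : Fin n' → Bool) (C : Config (recAlg n n' hn))
    (hg : Good (cfgP C) (cfgO C)) (σ : List (Event n')) :
    Good (cfgP (run _ input C σ)) (cfgO (run _ input C σ)) := by
  induction σ generalizing C with
  | nil => exact hg
  | cons e σ ih => exact ih _ ((trans_applyEvent h2 input C hg e).good hg)

theorem inv_run (h2 : n' < n) (input : Fin n' → Bool) (C : Config (recAlg n n' hn))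
    (hg : Good (cfgP C) (cfgO C)) (hi : Inv input (cfgP C) (cfgO C)) (σ : List (Event n')) :
    Inv input (cfgP (run _ input C σ)) (cfgO (run _ input C σ)) := by
  induction σ generalizing C with
  | nil => exact hi
  | cons e σ ih =>
    have ht := trans_applyEvent h2 input C hg e
    exact ih _ (ht.good hg) (ht.inv hi)

theorem mid_run (h2 : n' < n) (input : Fin n' → Bool) (C : Config (recAlg n n' hn))
    (hg : Good (cfgP C) (cfgO C)) (v : Bool) (hv : ∃ k, cfgO C = .mid v k)
    (σ : List (Event n')) : ∃ k, cfgO (run _ input C σ) = .mid v k := by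
  induction σ generalizing C with
  | nil => exact hv
  | cons e σ ih =>
    have ht := trans_applyEvent h2 input C hg e
    exact ih _ (ht.good hg) (ht.mid hv)

theorem good_init (input : Fin n' → Bool) :
    Good (cfgP (initConfig (recAlg n n' hn) input)) (cfgO (initConfig (recAlg n n' hn) input)) :=
  .inl rfl

theorem inv_init (input : Fin n' → Bool) :
    Inv input (cfgP (initConfig (recAlg n n' hn) input))
      (cfgO (initConfig (recAlg n n' hn) input)) where
  phase0 j x h := by cases h; rfl
  phase1 j x h := by cases h
  done j v h := by cases h
  mid v k h := by cases h

theorem output_eq_some (C : Config (recAlg n n' hn)) (i : Fin n') (v : Bool) :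
    (recAlg n n' hn).output i (C.pstate i) = some v ↔ cfgP C i = .done v := by
  change (match cfgP C i with | .done v => some v | _ => none) = some v ↔ _
  cases cfgP C i <;> simp

/-! ### Agreement, validity and recoverable wait-freedom -/

theorem recAlg_agreement (h2 : n' < n) : Agreement (recAlg n n' hn) := by
  intro input σ i j v w hv hw
  have key : ∀ i v, HasDecided (recAlg n n' hn) input (initConfig _ input) σ i v →
      ∃ k, cfgO (run _ input (initConfig (recAlg n n' hn) input) σ) = .mid v k := by
    rintro i v ⟨τ, ⟨ρ, rfl⟩, ho⟩
    rw [output_eq_some] at ho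
    rw [run_append]
    exact mid_run h2 input _ (good_run h2 input _ (good_init input) τ) v
      ((inv_run h2 input _ (good_init input) (inv_init input) τ).done i v ho) ρ
  obtain ⟨k, hk⟩ := key i v hv
  obtain ⟨l, hl⟩ := key j w hw
  rw [hk] at hl
  cases hl
  rfl

theorem recAlg_validity (h2 : n' < n) : Validity (recAlg n n' hn) := by
  rintro input σ i v ⟨τ, -, ho⟩
  rw [output_eq_some] at ho
  have hi := inv_run h2 input _ (good_init (hn := hn) input) (inv_init input) τ
  obtain ⟨k, hk⟩ := hi.done i v ho
  exact hi.mid v k hk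

/-- The first step after a (re)start either decides or finds the object in state `s`, from any
configuration. -/
theorem first_step (input : Fin n' → Bool) (C : Config (recAlg n n' hn)) (i : Fin n')
    (x : Bool) (h : cfgP C i = .phase0 x) :
    (∃ v, cfgP (applyEvent _ input C (.step i)) i = .done v) ∨
    (cfgP (applyEvent _ input C (.step i)) i = .phase1 x ∧
      cfgO (applyEvent _ input C (.step i)) = .s) := by
  obtain ⟨e1, e2⟩ := cfg_step_phase0 input C i x h
  have e3 := (congrFun e1 i).trans (Function.update_self _ _ _)
  rw [e3, e2]
  cases cfgO C with
  | s => exact .inr ⟨rfl, rfl⟩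
  | bot => exact .inl ⟨false, rfl⟩
  | mid v k =>
    by_cases hk : k.val + 1 ≤ n'
    · exact .inl ⟨v, by simp [TType, recAlg, hk]⟩
    · exact .inl ⟨false, by simp [TType, recAlg, hk]⟩

theorem second_step (input : Fin n' → Bool) (C : Config (recAlg n n' hn)) (i : Fin n')
    (x : Bool) (h : cfgP C i = .phase1 x) (hg : Good (cfgP C) (cfgO C)) :
    ∃ v, cfgP (applyEvent _ input C (.step i)) i = .done v := by
  obtain ⟨e1, -⟩ := cfg_step_phase1 input C i x h
  have e3 := (congrFun e1 i).trans (Function.update_self _ _ _)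
  rw [e3]
  rcases hg with ho | ⟨v, k, ho, -⟩ <;> rw [ho]
  · exact ⟨x, by cases x <;> rfl⟩
  · exact ⟨v, by cases x <;> by_cases hk : k.val + 1 < n - 1 <;> simp [TType, recAlg, hk]⟩

/-- If process `i` starts in its initial state or crashes at least once, but only finitely often,
then at some time it is in its initial state and never crashes afterwards. -/
theorem exists_last_start (input : Fin n' → Bool) (C : Config (recAlg n n' hn))
    (e : ℕ → Event n') (i : Fin n')
    (hinit : C.pstate i = (recAlg n n' hn).init i (input i) ∨ ∃ k, e k = Event.crash i)
    (hfin : ∃ m, ∀ k, m ≤ k → e k ≠ Event.crash i) :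
    ∃ a, cfgP (run _ input C (initSeg e a)) i = .phase0 (input i) ∧
      ∀ k, a ≤ k → e k ≠ Event.crash i := by
  by_cases hc : ∃ k, e k = Event.crash i
  · obtain ⟨m, hm⟩ := hfin
    have hbd : ∀ k, e k = Event.crash i → k ≤ m := fun k hk => by
      by_contra hlt
      exact hm k (by omega) hk
    classical
    obtain ⟨k₀, hk₀⟩ := hc
    have hs := Nat.findGreatest_spec (P := fun k => e k = Event.crash i) (hbd k₀ hk₀) hk₀
    refine ⟨Nat.findGreatest (fun k => e k = Event.crash i) m + 1, ?_, ?_⟩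
    · rw [run_initSeg_succ, hs]
      exact Function.update_self _ _ _
    · intro k hk hek
      have := Nat.le_findGreatest (P := fun k => e k = Event.crash i) (hbd k hek) hek
      omega
  · refine ⟨0, ?_, fun k _ hk => hc ⟨k, hk⟩⟩
    exact hinit.resolve_right hc

theorem recAlg_recWaitFree (h2 : n' < n) : RecWaitFree (recAlg n n' hn) := by
  intro input C e i hinit hstep hfin
  suffices h : ∃ k v, cfgP (run _ input C (initSeg e k)) i = .done v by
    obtain ⟨k, v, hv⟩ := h
    exact ⟨k, v, (output_eq_some _ i v).2 hv⟩
  obtain ⟨a, ha, hcrash⟩ := exists_last_start input C e i hinit hfin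
  obtain ⟨k, hak, hek, hk⟩ := exists_next_step _ input C e i a hstep hcrash
  have hf := first_step input _ i (input i) (hk.trans ha)
  rw [← hek, ← run_initSeg_succ] at hf
  rcases hf with ⟨v, hv⟩ | ⟨hp, ho⟩
  · exact ⟨k + 1, v, hv⟩
  obtain ⟨l, hkl, hel, hl⟩ := exists_next_step _ input C e i (k + 1) hstep
    (fun j hj => hcrash j (by omega))
  -- The object holds `s` at time `k + 1`, which establishes `Good` there and hence up to time `l`.
  have hgood : ∀ d, Good (cfgP (run _ input C (initSeg e (k + 1 + d))))
      (cfgO (run _ input C (initSeg e (k + 1 + d)))) := by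
    intro d
    induction d with
    | zero => exact .inl ho
    | succ d ih =>
      rw [← add_assoc, run_initSeg_succ]
      exact (trans_applyEvent h2 input _ ih _).good ih
  obtain ⟨d, rfl⟩ := Nat.exists_eq_add_of_le hkl
  obtain ⟨v, hv⟩ := second_step input _ i (input i) (hl.trans hp) (hgood d)
  rw [← hel, ← run_initSeg_succ] at hv
  exact ⟨_, v, hv⟩

end Alg

end RecoverableConsensus

open RecoverableConsensus in
/-- For all integers `n > n' ≥ 1`, a single object of type `𝒯_{n,n'}` with
initial value `s` solves recoverable wait-free binary consensus among `n'` processes: the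
algorithm in which each process with input `x` (also after each crash) first applies `op_R`
and decides `v` if the response is `s_{v,i}`, decides 0 if the response is `⊥`, and otherwise
(response `s`) applies `op_x` and decides the value returned, satisfies agreement, validity
and recoverable wait-freedom in every execution with individual crashes; moreover, in every
execution of this algorithm no `op_R` operation ever returns `⊥`. -/
theorem recAlg_solves_recoverable_consensus
    (n n' : ℕ) (h1 : 1 ≤ n') (h2 : n' < n) (hn : 2 ≤ n) :
    SolvesRecConsensus (recAlg n n' hn) ∧
    ∀ (input : Fin n' → Bool) (σ τ : List (Event n')) (i : Fin n'),
      (τ ++ [Event.step i]) <+: σ →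
      (recAlg n n' hn).pending i
          ((run (recAlg n n' hn) input (initConfig (recAlg n n' hn) input) τ).pstate i) =
        some ⟨(), TOp.opR⟩ →
      ((TType n n' hn).δ
          ((run (recAlg n n' hn) input (initConfig (recAlg n n' hn) input) τ).oval ())
          TOp.opR).1 ≠ TResp.botR := by
  refine ⟨⟨recAlg_agreement h2, recAlg_validity h2, recAlg_recWaitFree h2⟩, ?_⟩
  intro input σ τ i _ _
  have hg := good_run h2 input _ (good_init (hn := hn) input) τ
  change ((TType n n' hn).δ
    (cfgO (run (recAlg n n' hn) input (initConfig (recAlg n n' hn) input) τ)) TOp.opR).1 ≠ _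
  rcases hg with ho | ⟨v, k, ho, hc⟩ <;> rw [ho]
  · simp [TType]
  · have hk : k.val + 1 ≤ n' := by omega
    simp [TType, hk]
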